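/- arXiv:2008.00788 — 2 statements merged into one kernel-verified Lean document; each statement's English description precedes it below -/
import Mathlib

section
/- Strong implies weak formulation: Let M ≥ 0 and let u ∈ D_M with Δu = f in the strong sense, i.e. lim_{m→∞} max_{p ∈ V_m ∖ V_M} |N^{m+1} H_m u(p) − f(p)| = 0 for a continuous f. Then for every v ∈ dom_M E, E(u,v) = −∫_{Σ_N^+} f v dμ. -/
open Filter Topology MeasureTheory Finset Classical

noncomputable section

/-- The one-sided full shift space `Σ_N^+` on `N` symbols; coordinates are indexed
from `0`, so the paper's `x_1 x_2 ⋯` is `x 0, x 1, ⋯` here. It carries the product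
of the discrete topology on `Fin N`. -/
abbrev SSp (N : ℕ) : Type := ℕ → Fin N

/-- The level-`m` vertex set `V_m = {p : p_i = p_{i+1} for all i ≥ m+1}` (1-based),
i.e. the sequences that are constant from (0-based) coordinate `m` on.  It is
realized as a `Finset` via the parametrization by the first `m+1` coordinates;
see `mem_V` for the defining property. -/
noncomputable def V (N m : ℕ) : Finset (SSp N) :=
  (Finset.univ : Finset (Fin (m + 1) → Fin N)).image
    (fun w j => w ⟨min j m, by omega⟩)

lemma const_from (N m : ℕ) (p : SSp N) (h : ∀ i, m ≤ i → p i = p (i + 1)) :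
    ∀ j, m ≤ j → p j = p m := by
  intro j hj
  induction j with
  | zero => have : m = 0 := by omega
            simp [this]
  | succ k ih =>
      rcases Nat.lt_or_ge k m with hk | hk
      · have : m = k + 1 := by omega
        simp [this]
      · rw [← h k hk]
        exact ih hk

/-- Membership in `V N m` is exactly the paper's condition
`p_i = p_{i+1}` for all `i ≥ m+1` (1-based), i.e. `p i = p (i+1)` for all `i ≥ m`. -/
lemma mem_V {N m : ℕ} {p : SSp N} :
    p ∈ V N m ↔ ∀ i, m ≤ i → p i = p (i + 1) := by
  classical
  constructor
  · intro hp i hi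
    simp only [V, Finset.mem_image] at hp
    obtain ⟨w, -, rfl⟩ := hp
    have h1 : min i m = m := by omega
    have h2 : min (i + 1) m = m := by omega
    simp [h1, h2]
  · intro h
    simp only [V, Finset.mem_image]
    refine ⟨fun j => p j, Finset.mem_univ _, ?_⟩
    funext j
    rcases Nat.lt_or_ge j m with hj | hj
    · have : min j m = j := by omega
      simp [this]
    · have : min j m = m := by omega
      simp only [this]
      exact (const_from N m p h j hj).symm

/-- The deleted neighbourhood `U_{p,m} = {q ∈ V_m : q ≠ p, q_i = p_i for 1 ≤ i ≤ m}`
(1-based), i.e. `q` agrees with `p` on the first `m` (0-based: `i < m`) coordinates. -/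
noncomputable def U (N m : ℕ) (p : SSp N) : Finset (SSp N) :=
  (V N m).filter (fun q => q ≠ p ∧ ∀ i, i < m → q i = p i)

/-- `κ_p = min {j : p ∈ V_j}`. -/
noncomputable def kappa (N : ℕ) (p : SSp N) : ℕ := sInf {j | p ∈ V N j}

/-- The difference operator
`H_m u (p) = Σ_{i = κ_p}^{m} Σ_{q ∈ U_{p,i}} (u(q) − u(p))`. -/
noncomputable def H (N m : ℕ) (u : SSp N → ℝ) (p : SSp N) : ℝ :=
  ∑ i ∈ Finset.Icc (kappa N p) m, ∑ q ∈ U N i p, (u q - u p)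

/-- The Dirichlet form `E_{H_m}(u, v) = − Σ_{p ∈ V_m} u(p) · H_m v(p)`. -/
noncomputable def EH (N m : ℕ) (u v : SSp N → ℝ) : ℝ :=
  -∑ p ∈ V N m, u p * H N m v p

/-- The cylinder set `[p_1 ⋯ p_m]`, determined by the first `m` coordinates of `p`. -/
def cyl (N m : ℕ) (p : SSp N) : Set (SSp N) := {x | ∀ i, i < m → x i = p i}

/-- `χ_p^m` : the indicator function of the cylinder set `[p_1 ⋯ p_{m+1}]`. -/
noncomputable def chi (N m : ℕ) (p : SSp N) : SSp N → ℝ :=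
  (cyl N (m + 1) p).indicator 1

/-- `u ∈ dom E`: `u` is continuous and the energy
`E(u) = lim_m E_{H_m}(u|_{V_m})` exists (and is finite). -/
def MemDomE (N : ℕ) (u : SSp N → ℝ) : Prop :=
  Continuous u ∧ ∃ L : ℝ, Tendsto (fun m => EH N m u u) atTop (nhds L)

/-- `v ∈ dom_M E`: `v` has finite energy and vanishes on the boundary `V_M`. -/
def MemDomME (N M : ℕ) (v : SSp N → ℝ) : Prop :=
  MemDomE N v ∧ ∀ p ∈ V N M, v p = 0

/-- `u ∈ 𝒟_M` with `Δ u = f` (strong formulation with boundary `V_M`):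
`u` and `f` are continuous and
`lim_{m → ∞} max_{p ∈ V_m ∖ V_M} |N^{m+1} H_m u(p) − f(p)| = 0`. -/
def IsLaplacianOn (N M : ℕ) (u f : SSp N → ℝ) : Prop :=
  Continuous u ∧ Continuous f ∧
    ∀ ε : ℝ, 0 < ε → ∃ m₀ : ℕ, ∀ m, m₀ ≤ m → ∀ p ∈ V N m, p ∉ V N M →
      |(N : ℝ) ^ (m + 1) * H N m u p - f p| < ε

/-- `u ∈ D_μ` with `Δ u = f` (original definition of the Laplacian):
`u` and `f` are continuous and
`lim_{m → ∞} max_{p ∈ V_m ∖ V_{m−1}} |N^{m+1} H_m u(p) − f(p)| = 0`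
(the level is written `m+1` to avoid natural subtraction). -/
def IsLaplacianDmu (N : ℕ) (u f : SSp N → ℝ) : Prop :=
  Continuous u ∧ Continuous f ∧
    ∀ ε : ℝ, 0 < ε → ∃ m₀ : ℕ, ∀ m, m₀ ≤ m → ∀ p ∈ V N (m + 1), p ∉ V N m →
      |(N : ℝ) ^ (m + 2) * H N (m + 1) u p - f p| < ε

/-- `μ` is the equidistributed Bernoulli measure:
`μ([p_1 ⋯ p_m]) = N^{−m}` for every cylinder set. -/
def IsBernoulli (N : ℕ) (μ : Measure (SSp N)) : Prop :=
  ∀ (m : ℕ) (p : SSp N), μ (cyl N m p) = (N : ENNReal)⁻¹ ^ m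

/-- `ρ(x,y) = min {i : x_i ≠ y_i}` (1-based; `0`-based first disagreement plus one). -/
noncomputable def rho (N : ℕ) (x y : SSp N) : ℕ := sInf {i | x i ≠ y i} + 1

/-- The matrix `(G_m)_{pq}`: `2/N` if `q = p`, `1/N` if `q ∈ U_{p,m}`, `0` otherwise. -/
noncomputable def Gmat (N m : ℕ) (p q : SSp N) : ℝ :=
  if q = p then 2 / N else if q ∈ U N m p then 1 / N else 0

/-- The Green's function
`g(x,y) = Σ_{m=1}^{ρ(x,y)−1} Σ_{r,s ∈ V_m ∖ V_{m−1}} (G_m)_{rs} χ_r^m(x) χ_s^m(y)`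
for `ρ(x,y) > 1`, and `g(x,y) = 0` for `ρ(x,y) = 1` (the sum is then empty). -/
noncomputable def greenFn (N : ℕ) (x y : SSp N) : ℝ :=
  ∑ m ∈ Finset.Icc 1 (rho N x y - 1),
    ∑ r ∈ (V N m).filter (fun r => r ∉ V N (m - 1)),
      ∑ s ∈ (V N m).filter (fun s => s ∉ V N (m - 1)),
        Gmat N m r s * chi N m r x * chi N m s y

/-- The Green's operator `G_μ f (x) = ∫_{Σ_N^+ ∖ {x}} g(x,y) f(y) dμ(y)`. -/
noncomputable def Gop (N : ℕ) (μ : Measure (SSp N)) (f : SSp N → ℝ) (x : SSp N) : ℝ :=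
  ∫ y in ({x}ᶜ : Set (SSp N)), greenFn N x y * f y ∂μ


lemma mem_V_of_le {N i m : ℕ} (h : i ≤ m) {p : SSp N} (hp : p ∈ V N i) : p ∈ V N m :=
  mem_V.2 fun j hj => mem_V.1 hp j (h.trans hj)

lemma kappa_le_iff {N m i : ℕ} {p : SSp N} (hp : p ∈ V N m) : kappa N p ≤ i ↔ p ∈ V N i := by
  constructor
  · intro h
    have hmem : p ∈ V N (kappa N p) := Nat.sInf_mem (s := {j | p ∈ V N j}) ⟨m, hp⟩
    exact mem_V_of_le h hmem
  · intro h
    exact Nat.sInf_le (s := {j | p ∈ V N j}) h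

/-- Reordering the double sum in the Dirichlet form level by level. -/
lemma sum_mul_H (N m : ℕ) (u v : SSp N → ℝ) :
    ∑ p ∈ V N m, u p * H N m v p =
      ∑ i ∈ range (m + 1), ∑ p ∈ V N i, ∑ q ∈ U N i p, u p * (v q - v p) := by
  simp only [H, mul_sum]
  refine sum_comm' fun p i => ?_
  simp only [mem_Icc, mem_range, Nat.lt_succ_iff]
  constructor
  · rintro ⟨hp, hk, hi⟩
    exact ⟨(kappa_le_iff hp).1 hk, hi⟩
  · rintro ⟨hp, hi⟩
    exact ⟨mem_V_of_le hi hp, (kappa_le_iff hp).2 hp, hi⟩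

lemma sum_U_comm (N i : ℕ) (F : SSp N → SSp N → ℝ) :
    ∑ p ∈ V N i, ∑ q ∈ U N i p, F p q = ∑ p ∈ V N i, ∑ q ∈ U N i p, F q p := by
  refine sum_comm' (f := F) fun p q => ?_
  simp only [U, mem_filter]
  constructor
  · rintro ⟨hp, hq, hne, h⟩
    exact ⟨⟨hp, hne.symm, fun j hj => (h j hj).symm⟩, hq⟩
  · rintro ⟨⟨hp, hne, h⟩, hq⟩
    exact ⟨hp, hq, hne.symm, fun j hj => (h j hj).symm⟩

/-- The operator `H_m` is symmetric on functions on `V_m`. -/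
lemma EH_comm (N m : ℕ) (u v : SSp N → ℝ) : EH N m u v = EH N m v u := by
  rw [EH, EH, sum_mul_H, sum_mul_H]
  refine congrArg Neg.neg (sum_congr rfl fun i _ => ?_)
  simp only [mul_sub, sum_sub_distrib]
  rw [sum_U_comm N i fun p q => u p * v q]
  simp only [mul_comm]

lemma card_V (N m : ℕ) : (V N m).card = N ^ (m + 1) := by
  rw [V, card_image_of_injective]
  · simp
  · intro w w' h
    funext j
    have hj := congrFun h j
    have : min (j : ℕ) m = j := by omega
    simpa [this] using hj

/-- The point of `V_m` that agrees with `x` on the first `m + 1` coordinates. -/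
def vertexProj (N m : ℕ) (x : SSp N) : SSp N := fun j => x (min j m)

lemma vertexProj_mem (N m : ℕ) (x : SSp N) : vertexProj N m x ∈ V N m :=
  mem_V.2 fun i hi => by
    simp [vertexProj, min_eq_right hi, min_eq_right (hi.trans i.le_succ)]

lemma mem_cyl_iff_vertexProj_eq {N m : ℕ} {p : SSp N} (hp : p ∈ V N m) (x : SSp N) :
    x ∈ cyl N (m + 1) p ↔ vertexProj N m x = p := by
  constructor
  · intro h
    funext j
    change x (min j m) = p j
    rw [h _ (by omega)]
    rcases le_total j m with hj | hj
    · rw [min_eq_left hj]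
    · rw [min_eq_right hj, const_from N m p (mem_V.1 hp) j hj]
  · rintro rfl i hi
    simp [vertexProj, min_eq_left (Nat.lt_succ_iff.1 hi)]

lemma tendsto_vertexProj (N : ℕ) (x : SSp N) :
    Tendsto (fun m => vertexProj N m x) atTop (𝓝 x) := by
  refine tendsto_pi_nhds.2 fun j => tendsto_const_nhds.congr' ?_
  filter_upwards [eventually_ge_atTop j] with m hm
  simp [vertexProj, min_eq_left hm]

lemma continuous_vertexProj (N m : ℕ) : Continuous (vertexProj N m) :=
  continuous_pi fun _ => continuous_apply _

lemma measurableSet_cyl (N m : ℕ) (p : SSp N) : MeasurableSet (cyl N m p) := by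
  have : cyl N m p = ⋂ i, ⋂ (_ : i < m), (fun x : SSp N => x i) ⁻¹' {p i} := by
    ext x
    simp [cyl]
  rw [this]
  exact MeasurableSet.iInter fun i => MeasurableSet.iInter fun _ =>
    measurable_pi_apply i (measurableSet_singleton _)

lemma integral_comp_vertexProj {N : ℕ} {μ : Measure (SSp N)} [IsProbabilityMeasure μ]
    (hμ : IsBernoulli N μ) (g : SSp N → ℝ) (m : ℕ) :
    ∫ x, g (vertexProj N m x) ∂μ = ∑ p ∈ V N m, ((N : ℝ) ^ (m + 1))⁻¹ * g p := by
  have h : ∀ x, g (vertexProj N m x) =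
      ∑ p ∈ V N m, (cyl N (m + 1) p).indicator (fun _ => g p) x := by
    intro x
    rw [sum_eq_single_of_mem _ (vertexProj_mem N m x)]
    · rw [Set.indicator_of_mem]
      exact (mem_cyl_iff_vertexProj_eq (vertexProj_mem N m x) x).2 rfl
    · intro p hp hne
      refine Set.indicator_of_notMem (fun hx => hne ?_) _
      exact ((mem_cyl_iff_vertexProj_eq hp x).1 hx).symm
  simp only [h]
  rw [integral_finsetSum _ fun p _ =>
    (integrable_const (g p)).indicator (measurableSet_cyl N (m + 1) p)]
  refine sum_congr rfl fun p _ => ?_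
  rw [integral_indicator_const _ (measurableSet_cyl N (m + 1) p), measureReal_def, hμ]
  simp

/-- Averages over `V_m` of a continuous function converge to its Bernoulli integral. -/
lemma tendsto_sum_V {N : ℕ} {μ : Measure (SSp N)} [IsProbabilityMeasure μ]
    (hμ : IsBernoulli N μ) {g : SSp N → ℝ} (hg : Continuous g) :
    Tendsto (fun m => ∑ p ∈ V N m, ((N : ℝ) ^ (m + 1))⁻¹ * g p) atTop (𝓝 (∫ x, g x ∂μ)) := by
  simp only [← integral_comp_vertexProj hμ]
  obtain ⟨C, hC⟩ := isCompact_univ.exists_bound_of_continuousOn hg.continuousOn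
  refine tendsto_integral_of_dominated_convergence (fun _ => C) (fun m => ?_)
    (integrable_const C) (fun m => ?_) ?_
  · exact (hg.comp (continuous_vertexProj N m)).aestronglyMeasurable
  · exact ae_of_all _ fun x => hC _ trivial
  · exact ae_of_all _ fun x => (hg.tendsto x).comp (tendsto_vertexProj N x)

/-- The Dirichlet form against a function vanishing on `V_M` is asymptotic to the average of
`f * v` over `V_m`. -/
lemma tendsto_EH_add_sum {N M : ℕ} (hN : N ≠ 0) {u f v : SSp N → ℝ}
    (huf : IsLaplacianOn N M u f) (hvc : Continuous v) (hv : ∀ p ∈ V N M, v p = 0) :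
    Tendsto (fun m => EH N m u v + ∑ p ∈ V N m, ((N : ℝ) ^ (m + 1))⁻¹ * (f p * v p))
      atTop (𝓝 0) := by
  obtain ⟨C, hC⟩ := isCompact_univ.exists_bound_of_continuousOn hvc.continuousOn
  have hC1 : 0 < |C| + 1 := by positivity
  rw [Metric.tendsto_atTop]
  intro ε hε
  obtain ⟨m₀, hm₀⟩ := huf.2.2 (ε / 2 / (|C| + 1)) (by positivity)
  refine ⟨m₀, fun m hm => ?_⟩
  have hpow : (0 : ℝ) < (N : ℝ) ^ (m + 1) := by positivity
  have hterm : ∀ p ∈ V N m,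
      |((N : ℝ) ^ (m + 1))⁻¹ * (f p * v p) - v p * H N m u p| ≤
        ((N : ℝ) ^ (m + 1))⁻¹ * (ε / 2) := by
    intro p hp
    by_cases hpM : p ∈ V N M
    · simp only [hv p hpM, mul_zero, zero_mul, sub_zero, abs_zero]
      positivity
    · have hvp : |v p| ≤ |C| + 1 := by
        have := hC p trivial
        rw [Real.norm_eq_abs] at this
        linarith [le_abs_self C]
      have heq : ((N : ℝ) ^ (m + 1))⁻¹ * (f p * v p) - v p * H N m u p =
          -(((N : ℝ) ^ (m + 1))⁻¹ * (v p * ((N : ℝ) ^ (m + 1) * H N m u p - f p))) := by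
        field_simp
        ring
      rw [heq, abs_neg, abs_mul, abs_of_pos (inv_pos.2 hpow), abs_mul]
      gcongr
      calc |v p| * |(N : ℝ) ^ (m + 1) * H N m u p - f p|
          ≤ (|C| + 1) * (ε / 2 / (|C| + 1)) := by
            gcongr
            exact (hm₀ m hm p hp hpM).le
        _ = ε / 2 := by field_simp
  rw [Real.dist_eq, sub_zero, EH_comm, EH, neg_add_eq_sub, ← sum_sub_distrib]
  calc |∑ p ∈ V N m, (((N : ℝ) ^ (m + 1))⁻¹ * (f p * v p) - v p * H N m u p)|
      ≤ ∑ p ∈ V N m, ((N : ℝ) ^ (m + 1))⁻¹ * (ε / 2) :=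
        (abs_sum_le_sum_abs _ _).trans (sum_le_sum hterm)
    _ = ε / 2 := by
        rw [sum_const, card_V, nsmul_eq_mul]
        push_cast
        field_simp
    _ < ε := half_lt_self hε

/-- strong implies weak: if `u ∈ 𝒟_M` with `Δu = f` in the strong
sense, then for every `v ∈ dom_M E`, `E(u,v) = −∫ f v dμ`. -/
theorem statement7 (N : ℕ) (hN : 2 ≤ N)
    (μ : Measure (SSp N)) [IsProbabilityMeasure μ] (hμ : IsBernoulli N μ)
    (M : ℕ) (u f : SSp N → ℝ) (huf : IsLaplacianOn N M u f) :
    ∀ v : SSp N → ℝ, MemDomME N M v →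
      Tendsto (fun m => EH N m u v) atTop (nhds (-∫ x, f x * v x ∂μ)) := by
  intro v hv
  have h := (tendsto_EH_add_sum (by omega) huf hv.1.1 hv.2).sub
    (tendsto_sum_V hμ (huf.2.1.mul hv.1.1))
  simpa using h
end
end

section
/- Let M ≥ 0 and u ∈ D_M. Then for every p ∈ V_M, the sequence (H_m u(p))_{m ≥ M} is Cauchy, so the limit lim_{m→∞} H_m u(p) exists; hence the Neumann derivative (du)(p) = lim_{m→∞} (−H_m u(p)) is well-defined. -/
open Filter Topology MeasureTheory Finset Classical

noncomputable section

/-- The level-`m` vertices in the cylinder of length `m` around `p`. -/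
def cell (N m : ℕ) (p : SSp N) : Finset (SSp N) :=
  (V N m).filter (fun q => ∀ i, i < m → q i = p i)

lemma V_mono {N m n : ℕ} (h : m ≤ n) {p : SSp N} (hp : p ∈ V N m) : p ∈ V N n :=
  mem_V.2 fun i hi => mem_V.1 hp i (h.trans hi)

lemma kappa_le {N m : ℕ} {p : SSp N} (hp : p ∈ V N m) : kappa N p ≤ m :=
  Nat.sInf_le hp

lemma U_eq_erase_cell (N m : ℕ) (p : SSp N) : U N m p = (cell N m p).erase p := by
  ext q
  simp only [U, cell, mem_filter, mem_erase]
  tauto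

lemma sum_U_eq_sum_cell (N m : ℕ) (u : SSp N → ℝ) (p : SSp N) :
    ∑ q ∈ U N m p, (u q - u p) = ∑ q ∈ cell N m p, (u q - u p) := by
  rw [U_eq_erase_cell]
  exact sum_erase _ (sub_self _)

lemma cell_eq_of_mem {N m : ℕ} {p q : SSp N} (hq : q ∈ cell N m p) :
    cell N m q = cell N m p := by
  have hqp := (mem_filter.1 hq).2
  exact filter_congr fun r _ => forall₂_congr fun i hi => by rw [hqp i hi]

/-- The graph Laplacian of the complete graph on a cell sums to zero. -/
lemma sum_cell_sum_U (N m : ℕ) (u : SSp N → ℝ) (p : SSp N) :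
    ∑ q ∈ cell N m p, ∑ r ∈ U N m q, (u r - u q) = 0 := by
  have h : ∑ q ∈ cell N m p, ∑ r ∈ U N m q, (u r - u q)
      = ∑ q ∈ cell N m p, ∑ r ∈ cell N m p, (u r - u q) :=
    sum_congr rfl fun q hq => by rw [sum_U_eq_sum_cell, cell_eq_of_mem hq]
  rw [h]
  simp only [sum_sub_distrib]
  rw [sum_comm, sub_self]

lemma eq_of_mem_V {N m : ℕ} {q r : SSp N} (hq : q ∈ V N m) (hr : r ∈ V N m)
    (h : ∀ i, i ≤ m → q i = r i) : q = r := by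
  funext i
  rcases le_total i m with hi | hi
  · exact h i hi
  · rw [const_from N m q (mem_V.1 hq) i hi, const_from N m r (mem_V.1 hr) i hi, h m le_rfl]

lemma card_U_le (N m : ℕ) (p : SSp N) : (U N m p).card ≤ N := by
  have h : (U N m p).card ≤ (univ : Finset (Fin N)).card := by
    refine card_le_card_of_injOn (fun q => q m) (fun _ _ => mem_coe.2 (mem_univ _)) ?_
    intro q hq r hr hqr
    obtain ⟨hqV, -, hqp⟩ := mem_filter.1 (mem_coe.1 hq)
    obtain ⟨hrV, -, hrp⟩ := mem_filter.1 (mem_coe.1 hr)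
    refine eq_of_mem_V hqV hrV fun i hi => ?_
    rcases hi.lt_or_eq with hi | rfl
    · rw [hqp i hi, hrp i hi]
    · exact hqr
  simpa using h

/-- Level-`(m+1)` neighbours of a vertex of `V_m` are new at level `m+1`. -/
lemma notMem_V_of_mem_U {N m : ℕ} {p q : SSp N} (hp : p ∈ V N m) (hq : q ∈ U N (m + 1) p) :
    q ∉ V N m := by
  obtain ⟨-, hne, hqp⟩ := mem_filter.1 hq
  exact fun hqV => hne (eq_of_mem_V hqV hp fun i hi => hqp i (Nat.lt_succ_of_le hi))

lemma H_eq_sum_U_of_notMem {N m : ℕ} (u : SSp N → ℝ) {q : SSp N} (hq : q ∈ V N (m + 1))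
    (hq' : q ∉ V N m) : H N (m + 1) u q = ∑ r ∈ U N (m + 1) q, (u r - u q) := by
  have hmem : q ∈ V N (kappa N q) := Nat.sInf_mem (s := {j | q ∈ V N j}) ⟨_, hq⟩
  have hk : kappa N q = m + 1 := by
    refine le_antisymm (kappa_le hq) ?_
    by_contra h
    exact hq' (V_mono (by omega) hmem)
  rw [H, hk, Icc_self, sum_singleton]

lemma H_succ {N m : ℕ} (u : SSp N → ℝ) {p : SSp N} (hp : p ∈ V N m) :
    H N (m + 1) u p = H N m u p + ∑ q ∈ U N (m + 1) p, (u q - u p) :=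
  sum_Icc_succ_top ((kappa_le hp).trans m.le_succ) _

/-- The increment of `H_m u (p)` is minus the total of `H_{m+1} u` over the new neighbours. -/
lemma H_succ_sub {N m : ℕ} (u : SSp N → ℝ) {p : SSp N} (hp : p ∈ V N m) :
    H N (m + 1) u p - H N m u p = -∑ q ∈ U N (m + 1) p, H N (m + 1) u q := by
  have hpc : p ∈ cell N (m + 1) p :=
    mem_filter.2 ⟨V_mono m.le_succ hp, fun _ _ => rfl⟩
  have h0 := sum_cell_sum_U N (m + 1) u p
  rw [← add_sum_erase _ _ hpc, ← U_eq_erase_cell] at h0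
  have h1 : ∑ q ∈ U N (m + 1) p, H N (m + 1) u q
      = ∑ q ∈ U N (m + 1) p, ∑ r ∈ U N (m + 1) q, (u r - u q) :=
    sum_congr rfl fun q hq =>
      H_eq_sum_U_of_notMem u (mem_filter.1 hq).1 (notMem_V_of_mem_U hp hq)
  rw [H_succ u hp, h1]
  linarith

lemma cauchySeq_H {N : ℕ} (hN : 2 ≤ N) {M : ℕ} {u f : SSp N → ℝ}
    (hu : IsLaplacianOn N M u f) {p : SSp N} (hp : p ∈ V N M) :
    CauchySeq (fun m => H N m u p) := by
  obtain ⟨-, hf, hlim⟩ := hu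
  obtain ⟨C, hC⟩ := isCompact_univ.exists_bound_of_continuousOn hf.continuousOn
  obtain ⟨m₀, hm₀⟩ := hlim 1 one_pos
  have hN0 : (0 : ℝ) < N := by exact_mod_cast (by omega : 0 < N)
  have hN1 : (1 : ℝ) < N := by exact_mod_cast (by omega : 1 < N)
  have hC0 : 0 ≤ C := (norm_nonneg _).trans (hC p (Set.mem_univ p))
  refine (cauchySeq_shift (max m₀ M)).1 ?_
  refine cauchySeq_of_le_geometric (N : ℝ)⁻¹ (C + 1) (inv_lt_one_of_one_lt₀ hN1) fun n => ?_
  set m := n + max m₀ M with hm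
  have hpm : p ∈ V N m := V_mono (by omega) hp
  have hbound : ∀ q ∈ U N (m + 1) p, |H N (m + 1) u q| ≤ (C + 1) * ((N : ℝ)⁻¹) ^ (m + 2) := by
    intro q hq
    have hqM : q ∉ V N M := fun h => notMem_V_of_mem_U hpm hq (V_mono (by omega) h)
    have h1 := hm₀ (m + 1) (by omega) q (mem_filter.1 hq).1 hqM
    have h2 : |f q| ≤ C := hC q (Set.mem_univ q)
    have h3 : |(N : ℝ) ^ (m + 2) * H N (m + 1) u q| ≤ C + 1 := by
      have := abs_sub_abs_le_abs_sub ((N : ℝ) ^ (m + 2) * H N (m + 1) u q) (f q)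
      linarith
    rw [abs_mul, abs_of_pos (pow_pos hN0 _)] at h3
    rw [inv_pow, ← div_eq_mul_inv, le_div_iff₀ (pow_pos hN0 _), mul_comm]
    exact h3
  have hshift : n + 1 + max m₀ M = m + 1 := by omega
  rw [hshift, dist_comm, Real.dist_eq, H_succ_sub u hpm, abs_neg]
  calc |∑ q ∈ U N (m + 1) p, H N (m + 1) u q|
      ≤ ∑ q ∈ U N (m + 1) p, |H N (m + 1) u q| := abs_sum_le_sum_abs _ _
    _ ≤ (U N (m + 1) p).card • ((C + 1) * ((N : ℝ)⁻¹) ^ (m + 2)) := sum_le_card_nsmul _ _ _ hbound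
    _ ≤ N * ((C + 1) * ((N : ℝ)⁻¹) ^ (m + 2)) := by
        rw [nsmul_eq_mul]
        gcongr
        exact card_U_le N (m + 1) p
    _ = (C + 1) * ((N : ℝ)⁻¹) ^ (m + 1) := by
        rw [pow_succ _ (m + 1)]
        field_simp
    _ ≤ (C + 1) * ((N : ℝ)⁻¹) ^ n := by
        gcongr ?_ * ?_
        exact pow_le_pow_of_le_one (by positivity) (inv_le_one_of_one_le₀ hN1.le) (by omega)

/-- for `u ∈ 𝒟_M` and every `p ∈ V_M`, the sequence
`(H_m u(p))_m` is Cauchy, hence `lim_m H_m u(p)` exists, so the Neumann derivative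
`(du)(p) = lim_m (−H_m u (p))` is well-defined. -/
theorem statement11 (N : ℕ) (hN : 2 ≤ N) (M : ℕ) (u : SSp N → ℝ)
    (hu : ∃ f : SSp N → ℝ, IsLaplacianOn N M u f) :
    ∀ p ∈ V N M, CauchySeq (fun m => H N m u p) ∧
      ∃ L : ℝ, Tendsto (fun m => -(H N m u p)) atTop (nhds L) := by
  intro p hp
  obtain ⟨f, hf⟩ := hu
  have hc := cauchySeq_H hN hf hp
  obtain ⟨L, hL⟩ := cauchySeq_tendsto_of_complete hc
  exact ⟨hc, -L, hL.neg⟩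
end
end
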